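/- arXiv:2509.25880 — 2 statements merged into one kernel-verified Lean document; each statement's English description precedes it below -/
import Mathlib

section
/- Let S and E be nonempty sets and let Ω be a set of functions from E × ℕ to S. If Ω is determinable, then Ω has an iterator. -/
/-- `star ω t` is the "state profile" ω*(t) : E → S, i.e. `e ↦ ω (e, t)`. -/
def star {E S : Type*} (ω : E × ℕ → S) (t : ℕ) : E → S := fun e => ω (e, t)

/-- The consistency context of `ω` up to `t` inside `Ω`. -/
def CC {E S : Type*} (Ω : Set (E × ℕ → S)) (ω : E × ℕ → S) (t : ℕ) :
    Set (E × ℕ → S) :=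
  {ω' | ω' ∈ Ω ∧ ∀ e : E, ∀ t' ≤ t, ω' (e, t') = ω (e, t')}

/-- `Ω` is determinable: whenever `ω*(t) = ω'*(t')` there is a monotone bijection
`τ : t⁺ → t'⁺` such that the restrictions to `t⁺` of the `ωx*` for `ωx ∈ C(ω,t,Ω)`
coincide with the restrictions to `t'⁺` composed with `τ` of the `ωx*` for
`ωx ∈ C(ω',t',Ω)`. -/
def Determinable {E S : Type*} (Ω : Set (E × ℕ → S)) : Prop :=
  ∀ ω ∈ Ω, ∀ ω' ∈ Ω, ∀ t t' : ℕ, star ω t = star ω' t' →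
    ∃ τ : {n : ℕ // t ≤ n} → {n : ℕ // t' ≤ n},
      Monotone τ ∧ Function.Bijective τ ∧
      {f : {n : ℕ // t ≤ n} → E → S | ∃ ωx ∈ CC Ω ω t, f = fun n => star ωx n.val} =
      {f : {n : ℕ // t ≤ n} → E → S |
        ∃ ωx ∈ CC Ω ω' t', f = (fun n : {n : ℕ // t' ≤ n} => star ωx n.val) ∘ τ}

/-- `A`, the set of all state profiles occurring in `Ω`. -/
def StateSet {E S : Type*} (Ω : Set (E × ℕ → S)) : Set (E → S) :=
  {a | ∃ ω ∈ Ω, ∃ t : ℕ, star ω t = a}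

/-- `Ω` has an iterator: there is `i : A → 𝒫(A)` such that for all `ω ∈ Ω` and `t`,
`{ωx*(t+1) | ωx ∈ C(ω,t,Ω)} = i(ω*(t))`. -/
def HasIterator {E S : Type*} (Ω : Set (E × ℕ → S)) : Prop :=
  ∃ i : StateSet Ω → Set (StateSet Ω),
    ∀ ω (hω : ω ∈ Ω) (t : ℕ),
      {a : E → S | ∃ ωx ∈ CC Ω ω t, star ωx (t + 1) = a} =
        Subtype.val '' i ⟨star ω t, ⟨ω, hω, t, rfl⟩⟩

/-!
A monotone bijection `t⁺ → t'⁺` is an order isomorphism, so it sends the successor `t + 1` of the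
least element `t` to the successor `t' + 1` of the least element `t'`. Reading the identity of sets
of futures provided by determinability at time `t + 1` therefore shows that the set of possible next
states depends only on the current state, which is exactly what an iterator requires.
-/

section OrderIso

variable {α β : Type*} [PartialOrder α] [SuccOrder α] [PartialOrder β] [SuccOrder β]

theorem coe_succ_bot_Ici (a : α) :
    ((Order.succ ⊥ : Set.Ici a) : α) = Order.succ a :=
  coe_succ_of_mem (a := (⊥ : Set.Ici a)) (Order.le_succ a)

theorem coe_orderIso_Ici_succ {a : α} {b : β} (e : Set.Ici a ≃o Set.Ici b) :
    (e ⟨Order.succ a, Order.le_succ a⟩ : β) = Order.succ b := by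
  have succ_bot : (⟨Order.succ a, Order.le_succ a⟩ : Set.Ici a) = Order.succ ⊥ :=
    Subtype.ext (coe_succ_bot_Ici a).symm
  rw [succ_bot, e.map_succ, e.map_bot, coe_succ_bot_Ici]

end OrderIso

section Futures

variable {E S : Type*} {Ω : Set (E × ℕ → S)}

/-- The possible futures of `ω` from time `t` on: the restrictions to `t⁺` of the state profiles
of the elements of `C(ω, t, Ω)`. -/
def futures (Ω : Set (E × ℕ → S)) (ω : E × ℕ → S) (t : ℕ) : Set (Set.Ici t → E → S) :=
  (fun ωx (n : Set.Ici t) => star ωx n) '' CC Ω ω t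

/-- The state profiles that may follow that of `ω` at time `t`: the left-hand side of the equation
defining an iterator. -/
def nextStates (Ω : Set (E × ℕ → S)) (ω : E × ℕ → S) (t : ℕ) : Set (E → S) :=
  (fun ωx => star ωx (t + 1)) '' CC Ω ω t

theorem nextStates_eq_image_futures (Ω : Set (E × ℕ → S)) (ω : E × ℕ → S) (t : ℕ) :
    nextStates Ω ω t = Function.eval ⟨t + 1, Nat.le_succ t⟩ '' futures Ω ω t := by
  simp only [nextStates, futures, Set.image_image, Function.eval]

theorem nextStates_subset_stateSet (Ω : Set (E × ℕ → S)) (ω : E × ℕ → S) (t : ℕ) :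
    nextStates Ω ω t ⊆ StateSet Ω := by
  rintro _ ⟨ωx, hωx, rfl⟩
  exact ⟨ωx, hωx.1, t + 1, rfl⟩

theorem hasIterator_iff_nextStates_eq :
    HasIterator Ω ↔ ∀ ω ∈ Ω, ∀ ω' ∈ Ω, ∀ t t', star ω t = star ω' t' →
      nextStates Ω ω t = nextStates Ω ω' t' := by
  constructor
  · rintro ⟨i, hi⟩ ω hω ω' hω' t t' h
    calc nextStates Ω ω t = Subtype.val '' i ⟨star ω t, ω, hω, t, rfl⟩ := hi ω hω t
      _ = Subtype.val '' i ⟨star ω' t', ω', hω', t', rfl⟩ := by simp only [h]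
      _ = nextStates Ω ω' t' := (hi ω' hω' t').symm
  · intro h
    choose ρ hρ s hs using fun a : StateSet Ω => a.2
    refine ⟨fun a => Subtype.val ⁻¹' nextStates Ω (ρ a) (s a), fun ω hω t => ?_⟩
    rw [Subtype.image_preimage_coe, Set.inter_eq_right.2 (nextStates_subset_stateSet Ω _ _)]
    exact h ω hω _ (hρ _) t _ (hs ⟨_, _⟩).symm

theorem Determinable.exists_orderIso_futures_eq (hΩ : Determinable Ω) {ω ω' : E × ℕ → S}
    (hω : ω ∈ Ω) (hω' : ω' ∈ Ω) {t t' : ℕ} (h : star ω t = star ω' t') :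
    ∃ e : Set.Ici t ≃o Set.Ici t', futures Ω ω t = (· ∘ e) '' futures Ω ω' t' := by
  obtain ⟨τ, τ_mono, τ_bij, h_futures⟩ := hΩ ω hω ω' hω' t t' h
  refine ⟨(τ_mono.strictMono_of_injective τ_bij.1).orderIsoOfSurjective τ τ_bij.2, ?_⟩
  rw [futures, futures, Set.image_image]
  simp only [Set.image, eq_comm]
  exact h_futures

theorem nextStates_eq_of_futures_eq {ω ω' : E × ℕ → S} {t t' : ℕ} (e : Set.Ici t ≃o Set.Ici t')
    (h : futures Ω ω t = (· ∘ e) '' futures Ω ω' t') :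
    nextStates Ω ω t = nextStates Ω ω' t' := by
  have e_succ : e ⟨t + 1, Nat.le_succ t⟩ = ⟨t' + 1, Nat.le_succ t'⟩ :=
    Subtype.ext (coe_orderIso_Ici_succ e)
  calc nextStates Ω ω t
      = Function.eval ⟨t + 1, Nat.le_succ t⟩ '' ((· ∘ e) '' futures Ω ω' t') := by
        rw [nextStates_eq_image_futures, h]
    _ = Function.eval (e ⟨t + 1, Nat.le_succ t⟩) '' futures Ω ω' t' := Set.image_image _ _ _
    _ = nextStates Ω ω' t' := by rw [e_succ, nextStates_eq_image_futures]

end Futures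

theorem determinable_hasIterator {E S : Type*} [Nonempty E] [Nonempty S]
    (Ω : Set (E × ℕ → S)) (hΩ : Determinable Ω) : HasIterator Ω := by
  refine hasIterator_iff_nextStates_eq.2 fun ω hω ω' hω' t t' h => ?_
  obtain ⟨e, he⟩ := hΩ.exists_orderIso_futures_eq hω hω' h
  exact nextStates_eq_of_futures_eq e he
end

section
/- Let M = ⟨W, R, V⟩ be a Kripke model and let Q be modal equivalence on W. Then for every world w ∈ W and every modal formula φ: M, w ⊨ □φ if and only if for every world w'' ∈ W such that there exist a, b ∈ W with a Q w, b Q w'', and a R b, it holds that M, w'' ⊨ φ. -/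
/-- Modal formulas over a set `P` of propositional atoms. -/
inductive Formula (P : Type*) where
  | atom : P → Formula P
  | falsum : Formula P
  | impl : Formula P → Formula P → Formula P
  | box : Formula P → Formula P
  | dia : Formula P → Formula P

/-- Kripke satisfaction `M, w ⊨ φ` for the model with accessibility `R` and
valuation `V`. -/
def Sat {W P : Type*} (R : W → W → Prop) (V : P → Set W) :
    W → Formula P → Prop
  | w, .atom p => w ∈ V p
  | _, .falsum => False
  | w, .impl φ ψ => Sat R V w φ → Sat R V w ψ
  | w, .box φ => ∀ w', R w w' → Sat R V w' φ
  | w, .dia φ => ∃ w', R w w' ∧ Sat R V w' φ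

/-- Modal equivalence: two worlds satisfy exactly the same formulas. -/
def ModEq {W P : Type*} (R : W → W → Prop) (V : P → Set W) (w w' : W) : Prop :=
  ∀ φ : Formula P, Sat R V w φ ↔ Sat R V w' φ

section

variable {W P : Type*} {R : W → W → Prop} {V : P → Set W} {φ : Formula P} {a b w w'' : W}

theorem sat_box : Sat R V w (Formula.box φ) ↔ ∀ w', R w w' → Sat R V w' φ :=
  Iff.rfl

@[refl]
protected theorem ModEq.refl (w : W) : ModEq R V w w :=
  fun _ ↦ Iff.rfl

theorem sat_of_sat_box_of_modEq (h : Sat R V w (Formula.box φ)) (haw : ModEq R V a w)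
    (hbw : ModEq R V b w'') (hab : R a b) : Sat R V w'' φ :=
  have ha : Sat R V a (Formula.box φ) := (haw _).2 h
  have hb : Sat R V b φ := sat_box.1 ha b hab
  (hbw φ).1 hb

end

theorem box_iff_modEq_successors {W P : Type*}
    (R : W → W → Prop) (V : P → Set W) (w : W) (φ : Formula P) :
    Sat R V w (Formula.box φ) ↔
      ∀ w'' : W, (∃ a b : W, ModEq R V a w ∧ ModEq R V b w'' ∧ R a b) →
        Sat R V w'' φ := by
  constructor
  · rintro h w'' ⟨a, b, haw, hbw, hab⟩
    exact sat_of_sat_box_of_modEq h haw hbw hab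
  · intro h
    exact sat_box.2 fun w' hw ↦ h w' ⟨w, w', ModEq.refl w, ModEq.refl w', hw⟩
end
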